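/- arXiv:math-ph/0512068 — 2 statements merged into one kernel-verified Lean document; each statement's English description precedes it below -/
import Mathlib

section
/- Let μ be a restricted Lorentz transformation with polar decomposition μ = ρβ with respect to a timelike unit vector e₀. Then ρβ = βρ if and only if there exists a unit vector e orthogonal to e₀ such that μ maps the wedge W = {x : g(x,e) > |g(x,e₀)|} onto itself. -/
noncomputable section

/-- Minkowski spacetime ℝ^{1+3}. -/
abbrev V4 : Type := Fin 4 → ℝ

/-- The Minkowski metric of signature (+,-,-,-). -/
def mg (x y : V4) : ℝ := x 0 * y 0 - x 1 * y 1 - x 2 * y 2 - x 3 * y 3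

/-- The distinguished future-directed timelike unit vector. -/
def e0 : V4 := fun i => if i = 0 then 1 else 0

/-- A restricted Lorentz transformation: preserves the metric, has determinant 1,
and preserves the time orientation. -/
def IsRestrictedLorentz (T : V4 →ₗ[ℝ] V4) : Prop :=
  (∀ x y, mg (T x) (T y) = mg x y) ∧ LinearMap.det T = 1 ∧ 0 < (T e0) 0

/-- The Euclidean inner product `⟨x,y⟩_e = -g(x,y) + 2 g(x,e) g(y,e)`
determined by a timelike unit vector `e`. -/
def inn (e x y : V4) : ℝ := -mg x y + 2 * mg x e * mg y e

/-- A rotation with respect to `e`: a restricted Lorentz transformation fixing `e`. -/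
def IsRotationAt (e : V4) (T : V4 →ₗ[ℝ] V4) : Prop :=
  IsRestrictedLorentz T ∧ T e = e

/-- A boost with respect to `e`: a restricted Lorentz transformation that is
self-adjoint and positive with respect to `⟨·,·⟩_e`. -/
def IsBoostAt (e : V4) (T : V4 →ₗ[ℝ] V4) : Prop :=
  IsRestrictedLorentz T ∧ (∀ x y, inn e (T x) y = inn e x (T y)) ∧
    (∀ x, x ≠ 0 → 0 < inn e (T x) x)

lemma mg_e0 (x : V4) : mg x e0 = x 0 := by simp [mg, e0]

lemma inn_e0 (x y : V4) : inn e0 x y = x 0 * y 0 + x 1 * y 1 + x 2 * y 2 + x 3 * y 3 := by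
  rw [inn, mg_e0, mg_e0, mg]; ring

lemma e0_0 : e0 0 = 1 := by simp [e0]

lemma mg_comm (x y : V4) : mg x y = mg y x := by simp only [mg]; ring
lemma mg_add (x y z : V4) : mg x (y + z) = mg x y + mg x z := by
  simp only [mg, Pi.add_apply]; ring
lemma mg_sub (x y z : V4) : mg x (y - z) = mg x y - mg x z := by
  simp only [mg, Pi.sub_apply]; ring
lemma mg_smul (a : ℝ) (x y : V4) : mg x (a • y) = a * mg x y := by
  simp only [mg, Pi.smul_apply, smul_eq_mul]; ring
lemma add_mg (x y z : V4) : mg (y + z) x = mg y x + mg z x := by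
  simp only [mg, Pi.add_apply]; ring
lemma sub_mg (x y z : V4) : mg (y - z) x = mg y x - mg z x := by
  simp only [mg, Pi.sub_apply]; ring
lemma smul_mg (a : ℝ) (x y : V4) : mg (a • y) x = a * mg y x := by
  simp only [mg, Pi.smul_apply, smul_eq_mul]; ring

lemma inn_self_zero (x : V4) (h : inn e0 x x = 0) : x = 0 := by
  rw [inn_e0] at h
  have h0 : x 0 = 0 := by nlinarith [sq_nonneg (x 0), sq_nonneg (x 1), sq_nonneg (x 2), sq_nonneg (x 3)]
  have h1 : x 1 = 0 := by nlinarith [sq_nonneg (x 0), sq_nonneg (x 1), sq_nonneg (x 2), sq_nonneg (x 3)]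
  have h2 : x 2 = 0 := by nlinarith [sq_nonneg (x 0), sq_nonneg (x 1), sq_nonneg (x 2), sq_nonneg (x 3)]
  have h3 : x 3 = 0 := by nlinarith [sq_nonneg (x 0), sq_nonneg (x 1), sq_nonneg (x 2), sq_nonneg (x 3)]
  funext i; fin_cases i <;> assumption

lemma inn_sub (x y z : V4) : inn e0 (x - y) z = inn e0 x z - inn e0 y z := by
  simp only [inn_e0, Pi.sub_apply]; ring

lemma inn_ext (x y : V4) (h : ∀ z, inn e0 x z = inn e0 y z) : x = y := by
  have := inn_self_zero (x - y) (by rw [inn_sub, h]; ring)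
  exact sub_eq_zero.mp this

lemma spatial_zero (x : V4) (h0 : x 0 = 0) (h : mg x x = 0) : x = 0 := by
  apply inn_self_zero
  rw [inn, h, mg_e0, h0]; ring

/-- The time component of `β x`. -/
lemma boost_time {β : V4 →ₗ[ℝ] V4} (hβ : IsBoostAt e0 β) (x : V4) :
    (β x) 0 = inn e0 x (β e0) := by
  rw [← hβ.2.1, inn_e0]; simp [e0]

/-- A boost fixes spatial vectors orthogonal to the boost direction. -/
lemma boost_fix {β : V4 →ₗ[ℝ] V4} (hβ : IsBoostAt e0 β) (u : V4) (h0 : u 0 = 0)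
    (h : mg u (β e0) = 0) : β u = u := by
  have hb0 : (β u) 0 = 0 := by rw [boost_time hβ, inn, h, mg_e0, h0]; ring
  have hbb : β (β u) = u := by
    apply inn_ext
    intro z
    rw [hβ.2.1, inn, inn, hβ.1.1, mg_e0, hb0, mg_e0 u, h0]; ring
  by_contra hne
  have hw : β u - u ≠ 0 := sub_ne_zero.mpr hne
  have h1 := hβ.2.2 _ hw
  have h2 : β (β u - u) = - (β u - u) := by rw [map_sub, hbb]; abel
  rw [h2, inn_e0] at h1
  simp only [Pi.neg_apply] at h1
  nlinarith [sq_nonneg ((β u - u) 0), sq_nonneg ((β u - u) 1), sq_nonneg ((β u - u) 2), sq_nonneg ((β u - u) 3)]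

/-- Action of the boost on its spatial velocity. -/
lemma boost_v {β : V4 →ₗ[ℝ] V4} (hβ : IsBoostAt e0 β) (v : V4) (c : ℝ)
    (hv : β e0 = c • e0 + v) (h0 : v 0 = 0) : β v = (c ^ 2 - 1) • e0 + c • v := by
  apply inn_ext
  intro y
  have hv' : v = β e0 - c • e0 := by rw [hv]; abel
  have h1 : mg v (β y) = y 0 - c * (β y) 0 := by
    conv_lhs => rw [hv']
    rw [sub_mg, smul_mg, hβ.1.1, mg_comm, mg_e0, mg_comm, mg_e0]
  rw [hβ.2.1, inn, mg_e0, h0, h1, boost_time hβ, hv, inn_e0, inn_e0]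
  simp [e0, h0]
  ring

lemma rot_time {ρ : V4 →ₗ[ℝ] V4} (hρ : IsRotationAt e0 ρ) (x : V4) : (ρ x) 0 = x 0 := by
  have h := hρ.1.1 x e0
  rwa [hρ.2, mg_e0, mg_e0] at h

lemma commute_of_fix {ρ β : V4 →ₗ[ℝ] V4} (hρ : IsRotationAt e0 ρ) (hβ : IsBoostAt e0 β)
    (v : V4) (c : ℝ) (hv : β e0 = c • e0 + v) (h0 : v 0 = 0) (hρv : ρ v = v) :
    ρ ∘ₗ β = β ∘ₗ ρ := by
  apply LinearMap.ext
  intro x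
  have hbv := boost_v hβ v c hv h0
  set k : ℝ := mg x v / mg v v with hk
  set u : V4 := x - (x 0) • e0 - k • v with hu
  have hx : x = (x 0) • e0 + k • v + u := by rw [hu]; abel
  have hu0 : u 0 = 0 := by simp [hu, e0, h0]
  have huv : mg u v = 0 := by
    rw [hu, sub_mg, sub_mg, smul_mg, smul_mg, mg_comm e0, mg_e0, h0, hk]
    by_cases hz : mg v v = 0
    · have : v = 0 := spatial_zero v h0 hz
      simp [this, mg]
    · field_simp; ring
  have hR0 : (ρ u) 0 = 0 := by
    rw [rot_time hρ, hu0]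
  have hRv : mg (ρ u) v = 0 := by
    rw [← hρv, hρ.1.1, huv]
  have hbu : β u = u := boost_fix hβ u hu0 (by rw [hv, mg_add, mg_smul, mg_e0, hu0, huv]; ring)
  have hbRu : β (ρ u) = ρ u :=
    boost_fix hβ _ hR0 (by rw [hv, mg_add, mg_smul, mg_e0, hR0, hRv]; ring)
  rw [hx]
  simp only [LinearMap.comp_apply, map_add, map_smul, hbu, hbRu, hρ.2, hρv, hv, hbv]

/-- A rotation has an axis. -/
lemma exists_axis {ρ : V4 →ₗ[ℝ] V4} (hρ : IsRotationAt e0 ρ) :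
    ∃ w : V4, w ≠ 0 ∧ w 0 = 0 ∧ ρ w = w := by
  set M := LinearMap.toMatrix' ρ with hM
  set J : Matrix (Fin 4) (Fin 4) ℝ := Matrix.diagonal ![1, -1, -1, -1] with hJ
  have hJd : J.det = -1 := by
    rw [hJ, Matrix.det_diagonal, Fin.prod_univ_four]; simp
  have hJJ : J * J = 1 := by
    rw [hJ, Matrix.diagonal_mul_diagonal, ← Matrix.diagonal_one]
    congr 1; funext i; fin_cases i <;> simp
  have hMd : M.det = 1 := by rw [hM, LinearMap.det_toMatrix']; exact hρ.1.2.1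
  have hMJM : M.transpose * J * M = J := by
    ext i j
    have := hρ.1.1 (Pi.single i 1) (Pi.single j 1)
    simp only [mg] at this
    have e1 : ∀ a b, ρ (Pi.single b 1) a = M a b := by
      intro a b; rw [hM, LinearMap.toMatrix'_apply]
    simp only [e1] at this
    rw [Matrix.mul_apply]
    simp only [Fin.sum_univ_four, hJ, Matrix.mul_diagonal, Matrix.transpose_apply]
    simp
    have h2 : Matrix.diagonal ![(1:ℝ), -1, -1, -1] i j = Pi.single (M := fun _ => ℝ) i 1 0 * Pi.single (M := fun _ => ℝ) j 1 0 - Pi.single (M := fun _ => ℝ) i 1 1 * Pi.single (M := fun _ => ℝ) j 1 1 - Pi.single (M := fun _ => ℝ) i 1 2 * Pi.single (M := fun _ => ℝ) j 1 2 - Pi.single (M := fun _ => ℝ) i 1 3 * Pi.single (M := fun _ => ℝ) j 1 3 := by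
      fin_cases i <;> fin_cases j <;> simp [Matrix.diagonal, Pi.single_apply]
    rw [h2, ← this]; ring
  have hT : M.transpose * J * (M + J) = (M + J).transpose := by
    rw [mul_add, hMJM, mul_assoc, hJJ, mul_one, Matrix.transpose_add, hJ, Matrix.diagonal_transpose,
      add_comm]
  have hdet : (M + J).det = 0 := by
    have := congrArg Matrix.det hT
    rw [Matrix.det_mul, Matrix.det_mul, Matrix.det_transpose, Matrix.det_transpose, hMd, hJd] at this
    linarith
  obtain ⟨w, hw, hMw⟩ := Matrix.exists_mulVec_eq_zero_iff.mpr hdet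
  have hρw : ∀ i, ρ w i + ![1, -1, -1, -1] i * w i = 0 := by
    intro i
    have := congrFun hMw i
    rw [Matrix.add_mulVec, hM, LinearMap.toMatrix'_mulVec, Pi.add_apply, hJ,
      Matrix.mulVec_diagonal] at this
    exact this
  have h0 : (ρ w) 0 = w 0 := rot_time hρ _
  have hw0 : w 0 = 0 := by
    have := hρw 0
    simp at this
    linarith
  refine ⟨w, hw, hw0, ?_⟩
  funext i
  have := hρw i
  fin_cases i
  · exact h0
  all_goals simp at this ⊢; linarith

lemma exists_unit (w : V4) (hw : w ≠ 0) (h0 : w 0 = 0) :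
    ∃ a : ℝ, a ≠ 0 ∧ mg (a • w) (a • w) = -1 := by
  have h : 0 < - mg w w := by
    have h1 : mg w w ≠ 0 := fun h => hw (spatial_zero w h0 h)
    have h2 : mg w w ≤ 0 := by
      simp only [mg, h0]; nlinarith [sq_nonneg (w 1), sq_nonneg (w 2), sq_nonneg (w 3)]
    have := lt_of_le_of_ne h2 h1
    linarith
  refine ⟨(Real.sqrt (- mg w w))⁻¹, by positivity, ?_⟩
  rw [mg_smul, smul_mg]
  have hs := Real.mul_self_sqrt h.le
  have hp := Real.sqrt_pos.mpr h
  field_simp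
  nlinarith

lemma timelike_bound (c s : ℝ) (hc : 0 < c) (h : c ^ 2 - s ^ 2 = 1) : 0 < c + s ∧ 0 < c - s := by
  have : |s| < c := by
    apply abs_lt_of_sq_lt_sq _ hc.le
    linarith
  rw [abs_lt] at this
  constructor <;> linarith

lemma wedge_iff (e x : V4) : |mg x e0| < mg x e ↔ 0 < mg x (e + e0) ∧ 0 < mg x (e - e0) := by
  rw [mg_add, mg_sub, abs_lt]
  constructor <;> rintro ⟨a, b⟩ <;> constructor <;> linarith

lemma lorentz_bij {μ : V4 →ₗ[ℝ] V4} (hμ : IsRestrictedLorentz μ) : Function.Bijective μ := by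
  have : IsUnit (LinearMap.det μ) := by rw [hμ.2.1]; exact isUnit_one
  exact (Module.End.isUnit_iff μ).mp ((LinearMap.isUnit_iff_isUnit_det μ).mpr this)

lemma forward {μ ρ β : V4 →ₗ[ℝ] V4} (hμ : IsRestrictedLorentz μ)
    (hρ : IsRotationAt e0 ρ) (hβ : IsBoostAt e0 β) (hpolar : μ = ρ ∘ₗ β)
    (hc : ρ ∘ₗ β = β ∘ₗ ρ) :
      ∃ e : V4, mg e e = -1 ∧ mg e e0 = 0 ∧
        (⇑μ '' {x : V4 | |mg x e0| < mg x e}) = {x : V4 | |mg x e0| < mg x e} := by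
  set c : ℝ := (β e0) 0 with hcdef
  set v : V4 := β e0 - c • e0 with hvdef
  have hv : β e0 = c • e0 + v := by rw [hvdef]; abel
  have hv0 : v 0 = 0 := by simp [hvdef, e0, hcdef]
  have hcpos : 0 < c := hβ.1.2.2
  have hρv : ρ v = v := by
    have := LinearMap.congr_fun hc e0
    simp only [LinearMap.comp_apply, hρ.2] at this
    rw [hvdef, map_sub, map_smul, this, hρ.2]
  have key : ∃ e : V4, ∃ s : ℝ, mg e e = -1 ∧ e 0 = 0 ∧ ρ e = e ∧ v = s • e := by
    by_cases hz : v = 0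
    · obtain ⟨w, hw, hw0, hw1⟩ := exists_axis hρ
      obtain ⟨a, ha, hn⟩ := exists_unit w hw hw0
      exact ⟨a • w, 0, hn, by simp [hw0], by rw [map_smul, hw1], by simp [hz]⟩
    · obtain ⟨a, ha, hn⟩ := exists_unit v hz hv0
      exact ⟨a • v, a⁻¹, hn, by simp [hv0], by rw [map_smul, hρv], by rw [smul_smul, inv_mul_cancel₀ ha, one_smul]⟩
  obtain ⟨e, s, he, he0, hρe, hvs⟩ := key
  have hcs : c ^ 2 - s ^ 2 = 1 := by
    have h := hβ.1.1 e0 e0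
    rw [hv, hvs, mg_add, mg_smul, mg_smul, mg_e0, add_mg, smul_mg, smul_mg, he, mg_comm e0 e, mg_e0, mg_e0] at h
    simp [e0, he0] at h
    linarith
  have hβe : β e = s • e0 + c • e := by
    by_cases hs : s = 0
    · have hc1 : c = 1 := by rw [hs] at hcs; nlinarith
      rw [hs, hc1, zero_smul, zero_add, one_smul]
      apply boost_fix hβ e he0
      rw [hv, hvs, hs, zero_smul, add_zero, mg_smul, mg_e0, he0, mul_zero]
    · have h := boost_v hβ v c hv hv0
      rw [hvs, map_smul] at h
      have h2 : s • β e = s • (s • e0 + c • e) := by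
        rw [h, show c ^ 2 - 1 = s * s by linarith]
        module
      exact smul_right_injective _ hs h2
  have hμ0 : μ e0 = c • e0 + s • e := by
    rw [hpolar, LinearMap.comp_apply, hv, hvs, map_add, map_smul, map_smul, hρ.2, hρe]
  have hμe : μ e = s • e0 + c • e := by
    rw [hpolar, LinearMap.comp_apply, hβe, map_add, map_smul, map_smul, hρ.2, hρe]
  have hp : μ (e + e0) = (c + s) • (e + e0) := by rw [map_add, hμ0, hμe]; module
  have hm : μ (e - e0) = (c - s) • (e - e0) := by rw [map_sub, hμ0, hμe]; module
  obtain ⟨b1, b2⟩ := timelike_bound c s hcpos hcs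
  have hiff : ∀ x, |mg (μ x) e0| < mg (μ x) e ↔ |mg x e0| < mg x e := by
    intro x
    rw [wedge_iff, wedge_iff, ← hμ.1 x (e + e0), ← hμ.1 x (e - e0), hp, hm, mg_smul, mg_smul,
      mul_pos_iff_of_pos_left b1, mul_pos_iff_of_pos_left b2]
  refine ⟨e, he, by rw [mg_e0, he0], ?_⟩
  ext y
  obtain ⟨x, rfl⟩ := (lorentz_bij hμ).2 y
  rw [(lorentz_bij hμ).1.mem_set_image]
  exact (hiff x).symm

/-- The preimage of a null direction bounding the wedge. -/
lemma null_pre {μ : V4 →ₗ[ℝ] V4} (hμ : IsRestrictedLorentz μ) (e n m : V4) (σ : ℝ)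
    (hσ : σ = 1 ∨ σ = -1)
    (he : mg e e = -1) (he0 : e 0 = 0) (hn : n = e + σ • e0) (hm : μ m = n)
    (hpos : ∀ x, |mg x e0| < mg x e → 0 < mg (μ x) n) :
    ∃ q : ℝ, 0 < q ∧ μ n = q • n := by
  have hF : ∀ x, |mg x e0| < mg x e → 0 < mg x m := by
    intro x hx
    have := hpos x hx
    rwa [← hm, hμ.1] at this
  have hσ2 : σ ^ 2 = 1 := by rcases hσ with h | h <;> rw [h] <;> norm_num
  -- the edge
  have hedge : ∀ u, u 0 = 0 → mg u e = 0 → mg u m = 0 := by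
    intro u hu0 hue
    have hT : ∀ T : ℝ, 0 < - mg e m + T * mg u m := by
      intro T
      have := hF ((-1 : ℝ) • e + T • u) (by
        rw [mg_e0, add_mg, smul_mg, smul_mg, he, hue]
        simp [he0, hu0])
      rw [add_mg, smul_mg, smul_mg] at this
      linarith
    by_contra hne
    have := hT (mg e m / mg u m)
    rw [div_mul_cancel₀ _ hne] at this
    linarith
  have hq : 0 < - mg e m := by
    have := hF ((-1 : ℝ) • e) (by
        rw [mg_e0, smul_mg, he]
        simp [he0])
    rw [smul_mg] at this
    linarith
  set q : ℝ := - mg e m with hqdef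
  set p : ℝ := m 0 with hpdef
  have hee : mg e e0 = 0 := by rw [mg_e0, he0]
  have hee' : mg e0 e = 0 := by rw [mg_comm, hee]
  have h00 : mg e0 e0 = 1 := by rw [mg_e0, e0_0]
  have hme : mg m e = - q := by rw [mg_comm, hqdef]; ring
  have hmeq : m = p • e0 + q • e := by
    set u : V4 := m - p • e0 - q • e with hu
    have hu0 : u 0 = 0 := by simp [hu, e0, he0, hpdef]
    have hue : mg u e = 0 := by
      rw [hu, sub_mg, sub_mg, smul_mg, smul_mg, he, hee', hme]; ring
    have hum := hedge u hu0 hue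
    have huu : mg u u = 0 := by
      have : mg u (m - p • e0 - q • e) = 0 := by
        rw [mg_sub, mg_sub, mg_smul, mg_smul, hue, hum, mg_e0, hu0]; ring
      exact this
    have := spatial_zero u hu0 huu
    rw [hu] at this
    have h3 := sub_eq_zero.mp this
    rw [← h3]; abel
  have hnull : p ^ 2 = q ^ 2 := by
    have h := hμ.1 m m
    rw [hm, hn, hmeq] at h
    simp only [mg_add, add_mg, mg_smul, smul_mg, he, hee, hee', h00] at h
    nlinarith
  -- time orientation
  have horient : 0 < σ * p := by
    have h1 : mg n (μ e0) = p := by rw [← hm, hμ.1, mg_e0]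
    have h2 : mg (μ e0) (μ e0) = 1 := by rw [hμ.1, h00]
    have h3 := hμ.2.2
    rw [hn, add_mg, smul_mg, mg_comm e0, mg_e0] at h1
    have hcs : (mg e (μ e0)) ^ 2 < ((μ e0) 0) ^ 2 := by
      simp only [mg, he0] at h2 he ⊢
      generalize (μ e0) 0 = a0 at *
      generalize (μ e0) 1 = a1 at *
      generalize (μ e0) 2 = a2 at *
      generalize (μ e0) 3 = a3 at *
      nlinarith [sq_nonneg (a1 * e 2 - a2 * e 1), sq_nonneg (a1 * e 3 - a3 * e 1), sq_nonneg (a2 * e 3 - a3 * e 2)]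
    have h4 := abs_lt.mp (abs_lt_of_sq_lt_sq hcs h3.le)
    rcases hσ with h | h <;> rw [h] at h1 ⊢ <;> linarith [h4.1, h4.2]
  have hpq : p = σ * q := by
    have : (σ * p - q) * (σ * p + q) = 0 := by nlinarith
    rcases mul_eq_zero.mp this with h | h
    · have : σ * (σ * p) = σ * q := by rw [sub_eq_zero.mp h]
      rw [← this]; nlinarith
    · linarith
  have hmn : m = q • n := by rw [hmeq, hpq, hn]; module
  refine ⟨q⁻¹, by positivity, ?_⟩
  have : q • μ n = n := by rw [← map_smul, ← hmn, hm]
  conv_rhs => rw [← this]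
  rw [smul_smul, inv_mul_cancel₀ hq.ne', one_smul]

lemma backward {μ ρ β : V4 →ₗ[ℝ] V4} (hμ : IsRestrictedLorentz μ)
    (hρ : IsRotationAt e0 ρ) (hβ : IsBoostAt e0 β) (hpolar : μ = ρ ∘ₗ β)
    (e : V4) (he : mg e e = -1) (hee : mg e e0 = 0)
    (hW : (⇑μ '' {x : V4 | |mg x e0| < mg x e}) = {x : V4 | |mg x e0| < mg x e}) :
    ρ ∘ₗ β = β ∘ₗ ρ := by
  have he0 : e 0 = 0 := by rw [← mg_e0 e, hee]
  have hmem : ∀ x, |mg x e0| < mg x e → |mg (μ x) e0| < mg (μ x) e := by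
    intro x hx
    have : μ x ∈ (⇑μ '' {x : V4 | |mg x e0| < mg x e}) := ⟨x, hx, rfl⟩
    rw [hW] at this
    exact this
  obtain ⟨m1, hm1⟩ := (lorentz_bij hμ).2 (e + e0)
  obtain ⟨m2, hm2⟩ := (lorentz_bij hμ).2 (e - e0)
  obtain ⟨a, ha, h1⟩ := null_pre hμ e (e + e0) m1 1 (Or.inl rfl) he he0 (by simp) hm1
    (fun x hx => ((wedge_iff e _).mp (hmem x hx)).1)
  obtain ⟨b, hb, h2⟩ := null_pre hμ e (e - e0) m2 (-1) (Or.inr rfl) he he0 (by module) hm2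
    (fun x hx => ((wedge_iff e _).mp (hmem x hx)).2)
  set c : ℝ := (a + b) / 2 with hc
  set s : ℝ := (a - b) / 2 with hs
  have hμ0 : μ e0 = c • e0 + s • e := by
    have : e0 = (1 / 2 : ℝ) • (e + e0) - (1 / 2 : ℝ) • (e - e0) := by module
    conv_lhs => rw [this]
    rw [map_sub, map_smul, map_smul, h1, h2, hc, hs]; module
  have hμe : μ e = s • e0 + c • e := by
    have : e = (1 / 2 : ℝ) • (e + e0) + (1 / 2 : ℝ) • (e - e0) := by module
    conv_lhs => rw [this]
    rw [map_add, map_smul, map_smul, h1, h2, hc, hs]; module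
  have hcs : c ^ 2 - s ^ 2 = 1 := by
    have h := hμ.1 e0 e0
    have hee' : mg e0 e = 0 := by rw [mg_comm, hee]
    have h00 : mg e0 e0 = 1 := by rw [mg_e0, e0_0]
    rw [hμ0] at h
    simp only [mg_add, add_mg, mg_smul, smul_mg, he, hee, hee', h00] at h
    linarith
  set v : V4 := β e0 - c • e0 with hvdef
  have hv : β e0 = c • e0 + v := by rw [hvdef]; abel
  have hρv : ρ v = s • e := by
    have : ρ (β e0) = μ e0 := by rw [hpolar]; rfl
    rw [hvdef, map_sub, map_smul, this, hρ.2, hμ0]; abel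
  have hv0 : v 0 = 0 := by
    have : (ρ v) 0 = v 0 := rot_time hρ _
    rw [← this, hρv]; simp [he0]
  have hve : v = s • e := by
    apply (lorentz_bij hμ).1
    have h3 : μ v = ρ (β v) := by rw [hpolar]; rfl
    rw [h3, boost_v hβ v c hv hv0, map_add, map_smul, map_smul, hρ.2, hρv, map_smul, hμe,
      show c ^ 2 - 1 = s * s by linarith]
    module
  exact commute_of_fix hρ hβ v c hv hv0 (by rw [hρv, hve])

/-- Let `μ = ρ ∘ β` be the polar decomposition of a restricted Lorentz
transformation with respect to `e₀`. Then `ρ` and `β` commute if and only if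
there is a spacelike unit vector `e ⊥ e₀` such that `μ` maps the Rindler wedge
`W = {x : g(x,e) > |g(x,e₀)|}` onto itself. -/
theorem polar_commutes_iff_preserves_wedge
    (μ ρ β : V4 →ₗ[ℝ] V4) (hμ : IsRestrictedLorentz μ)
    (hρ : IsRotationAt e0 ρ) (hβ : IsBoostAt e0 β) (hpolar : μ = ρ ∘ₗ β) :
    ρ ∘ₗ β = β ∘ₗ ρ ↔
      ∃ e : V4, mg e e = -1 ∧ mg e e0 = 0 ∧
        (⇑μ '' {x : V4 | |mg x e0| < mg x e}) = {x : V4 | |mg x e0| < mg x e} := by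
  constructor
  · exact forward hμ hρ hβ hpolar
  · rintro ⟨e, he, hee, hW⟩
    exact backward hμ hρ hβ hpolar e he hee hW
end
end

section
/- If μ is a restricted Lorentz transformation whose polar decomposition μ = ρ_{e₀}β_{e₀} commutes (ρ_{e₀}β_{e₀} = β_{e₀}ρ_{e₀}) for every future-directed timelike unit vector e₀, then μ = 1. -/
noncomputable section

lemma mg_add_left (x y z : V4) : mg (x + y) z = mg x z + mg y z := by
  simp only [mg, Pi.add_apply]; ring
lemma mg_add_right (x y z : V4) : mg z (x + y) = mg z x + mg z y := by
  simp only [mg, Pi.add_apply]; ring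
lemma mg_smul_left (c : ℝ) (x z : V4) : mg (c • x) z = c * mg x z := by
  simp only [mg, Pi.smul_apply, smul_eq_mul]; ring
lemma mg_smul_right (c : ℝ) (x z : V4) : mg z (c • x) = c * mg z x := by
  simp only [mg, Pi.smul_apply, smul_eq_mul]; ring
/-- The orthogonal complement of a timelike vector is negative definite. -/
lemma neg_orth (v y : V4) (hv : 0 < mg v v) (hy : mg y v = 0) (h : 0 ≤ mg y y) : y = 0 := by
  simp only [mg] at hv hy h
  have cs : (y 0 * v 0)^2 ≤ (y 1^2+y 2^2+y 3^2) * (v 1^2+v 2^2+v 3^2) := by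
    have : y 0 * v 0 = y 1 * v 1 + y 2 * v 2 + y 3 * v 3 := by linarith
    rw [this]
    nlinarith [sq_nonneg (y 1 * v 2 - y 2 * v 1), sq_nonneg (y 1 * v 3 - y 3 * v 1),
      sq_nonneg (y 2 * v 3 - y 3 * v 2)]
  set A := y 1^2+y 2^2+y 3^2 with hA
  set B := v 1^2+v 2^2+v 3^2 with hB
  have hAn : 0 ≤ A := by positivity
  have hBn : 0 ≤ B := by positivity
  have h1 : A ≤ y 0 ^ 2 := by nlinarith
  have h2 : B < v 0 ^ 2 := by nlinarith
  have hA0 : A = 0 := by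
    by_contra hne
    have hp : 0 < A := lt_of_le_of_ne hAn (Ne.symm hne)
    have h3 : A * v 0 ^ 2 ≤ y 0 ^ 2 * v 0 ^ 2 := mul_le_mul_of_nonneg_right h1 (sq_nonneg _)
    have h4 : A * B < A * v 0 ^ 2 := mul_lt_mul_of_pos_left h2 hp
    nlinarith
  have h5 : y 0 = 0 := by
    have hv0 : 0 < v 0 ^ 2 := by linarith
    have : y 0 ^ 2 * v 0 ^ 2 ≤ 0 := by rw [hA0] at cs; nlinarith
    have : y 0 ^ 2 ≤ 0 := by
      by_contra hc
      push Not at hc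
      nlinarith [mul_pos hc hv0]
    exact pow_eq_zero_iff (two_ne_zero) |>.1 (le_antisymm this (sq_nonneg _))
  have e1 : y 1 = 0 := by nlinarith [sq_nonneg (y 1), sq_nonneg (y 2), sq_nonneg (y 3)]
  have e2 : y 2 = 0 := by nlinarith [sq_nonneg (y 1), sq_nonneg (y 2), sq_nonneg (y 3)]
  have e3 : y 3 = 0 := by nlinarith [sq_nonneg (y 1), sq_nonneg (y 2), sq_nonneg (y 3)]
  ext i; fin_cases i <;> simp [*]

lemma pos_quad (v x : V4) (hv : 0 < mg v v) (hx : x ≠ 0) :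
    mg x x * mg v v < 2 * mg x v ^ 2 := by
  by_cases h0 : mg x v = 0
  · rw [h0]
    have : mg x x < 0 := by
      by_contra hc
      exact hx (neg_orth v x hv h0 (not_lt.1 hc))
    nlinarith
  have hp : 0 < mg x v ^ 2 := by positivity
  by_contra hc
  push Not at hc
  have := neg_orth v (mg v v • x + (- mg x v) • v) hv
    (by simp only [mg_add_left, mg_smul_left]; ring)
    (by
      simp only [mg_add_left, mg_smul_left, mg_add_right, mg_smul_right, mg_comm v x]
      nlinarith)
  have h2 : mg (mg v v • x + (- mg x v) • v) x = 0 := by rw [this]; simp [mg]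
  simp only [mg_add_left, mg_smul_left, mg_comm v x] at h2
  nlinarith

/-- Two unit future vectors have positive product. -/
lemma fut_pos (x y : V4) (hx : 0 < mg x x) (hy : 0 < mg y y) (hx0 : 0 < x 0) (hy0 : 0 < y 0) :
    0 < mg x y := by
  by_contra hc
  push Not at hc
  simp only [mg] at *
  have cs : (x 1 * y 1 + x 2 * y 2 + x 3 * y 3)^2 ≤
      (x 1^2+x 2^2+x 3^2) * (y 1^2+y 2^2+y 3^2) := by
    nlinarith [sq_nonneg (x 1 * y 2 - x 2 * y 1), sq_nonneg (x 1 * y 3 - x 3 * y 1),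
      sq_nonneg (x 2 * y 3 - x 3 * y 2)]
  have h1 : (x 0 * y 0)^2 ≤ (x 1 * y 1 + x 2 * y 2 + x 3 * y 3)^2 :=
    pow_le_pow_left₀ (by positivity) (by linarith) 2
  have h2 : (x 1^2+x 2^2+x 3^2) * (y 1^2+y 2^2+y 3^2) < x 0 ^ 2 * y 0 ^ 2 :=
    mul_lt_mul'' (by nlinarith) (by nlinarith) (by positivity) (by positivity)
  nlinarith

lemma pos_fut (x y : V4) (hx : 0 < mg x x) (hy : 0 < mg y y) (hy0 : 0 < y 0) (h : 0 < mg x y) :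
    0 < x 0 := by
  by_contra hc
  push Not at hc
  rcases hc.lt_or_eq with h1 | h1
  · have := fut_pos ((-1 : ℝ) • x) y (by simp only [mg_smul_left, mg_smul_right]; linarith) hy
      (by simpa using h1) hy0
    rw [mg_smul_left] at this
    linarith
  · simp only [mg, h1] at hx
    nlinarith [sq_nonneg (x 1), sq_nonneg (x 2), sq_nonneg (x 3)]

/-- The linear form `g(·,v)`. -/
def mgL (v : V4) : Module.Dual ℝ V4 where
  toFun x := mg x v
  map_add' x y := mg_add_left x y v
  map_smul' c x := mg_smul_left c x v

/-- Reflection along `v`. -/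
def refl4 (v : V4) : V4 →ₗ[ℝ] V4 := LinearMap.transvection ((-2 / mg v v) • mgL v) v

lemma refl4_apply (v x : V4) : refl4 v x = x + (-2 / mg v v * mg x v) • v := by
  simp [refl4, LinearMap.transvection.apply, mgL]

lemma refl4_det (v : V4) (hv : mg v v ≠ 0) : LinearMap.det (refl4 v) = -1 := by
  rw [refl4, LinearMap.transvection.det]
  simp only [LinearMap.smul_apply, smul_eq_mul]
  change 1 + -2 / mg v v * mg v v = -1
  field_simp; norm_num

lemma refl4_adj (v x y : V4) : mg (refl4 v x) y = mg x (refl4 v y) := by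
  simp only [refl4_apply, mg_add_left, mg_add_right, mg_smul_left, mg_smul_right, mg_comm v y]
  ring

lemma refl4_invol (v x : V4) (hv : mg v v ≠ 0) : refl4 v (refl4 v x) = x := by
  simp only [refl4_apply, mg_add_left, mg_smul_left]
  rw [add_assoc, ← add_smul]
  have : (-2 / mg v v * mg x v + -2 / mg v v * (mg x v + -2 / mg v v * mg x v * mg v v)) = 0 := by
    field_simp; ring
  rw [this]; simp

lemma refl4_iso (v x y : V4) (hv : mg v v ≠ 0) : mg (refl4 v x) (refl4 v y) = mg x y := by
  rw [refl4_adj, refl4_invol v y hv]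

/-- The commuting polar decomposition hypothesis at `e` gives `μ e + μ⁻¹ e ∈ ℝ e`. -/
lemma key (μ ν : V4 →ₗ[ℝ] V4) (hμ : IsRestrictedLorentz μ)
    (hμν : ∀ x, μ (ν x) = x) (hνμ : ∀ x, ν (μ x) = x) 
    (hcomm : ∀ (e : V4) (ρ β : V4 →ₗ[ℝ] V4), mg e e = 1 → 0 < e 0 →
      IsRotationAt e ρ → IsBoostAt e β → μ = ρ ∘ₗ β → ρ ∘ₗ β = β ∘ₗ ρ)
    (e : V4) (he : mg e e = 1) (he0 : 0 < e 0) : μ e + ν e = (2 * mg e (ν e)) • e := by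
  obtain ⟨hiso, hdet, hfut⟩ := hμ
  have hνiso : ∀ x y, mg (ν x) (ν y) = mg x y := fun x y => by rw [← hiso, hμν, hμν]
  have h00 : mg e0 e0 = 1 := by simp [mg, e0]
  have he00 : 0 < e0 0 := by simp [e0]
  have hν0 : 0 < (ν e0) 0 := by
    apply pos_fut _ e0 (by rw [hνiso, h00]; norm_num) (by rw [h00]; norm_num) he00
    rw [← hiso, hμν, mg_comm, mg_e0]; exact hfut
  have hw1 : mg (ν e) (ν e) = 1 := by rw [hνiso, he]
  have hw0 : 0 < (ν e) 0 := by
    apply pos_fut _ (ν e0) (by rw [hw1]; norm_num) (by rw [hνiso, h00]; norm_num) hν0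
    rw [hνiso, mg_e0]; exact he0
  set w := ν e with hw
  have hγ : 0 < mg e w := fut_pos e w (by rw [he]; norm_num) (by rw [hw1]; norm_num) he0 hw0
  set v := e + w with hv
  have hvv : mg v v = 2 + 2 * mg e w := by
    simp only [hv, mg_add_left, mg_add_right, he, hw1, mg_comm w e]; ring
  have hvp : 0 < mg v v := by rw [hvv]; linarith
  have hvn : mg v v ≠ 0 := hvp.ne'
  have hen : mg e e ≠ 0 := by rw [he]; norm_num
  have hRvw : refl4 v w = (-1 : ℝ) • e := by
    have : -2 / mg v v * mg w v = -1 := by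
      have h1 : mg w v = 1 + mg e w := by rw [hv, mg_add_right, hw1, mg_comm w e]; ring
      rw [h1, hvv]; have : 2 + 2 * mg e w ≠ 0 := by linarith
      field_simp
    rw [refl4_apply, this, hv]; module
  have hRve : refl4 v e = (-1 : ℝ) • w := by
    have : refl4 v (refl4 v w) = (-1 : ℝ) • refl4 v e := by rw [hRvw, map_smul]
    rw [refl4_invol v w hvn] at this
    rw [this]; module
  have hRee : refl4 e e = (-1 : ℝ) • e := by
    rw [refl4_apply, he]; module
  set β := refl4 e ∘ₗ refl4 v with hβ
  set ρ := μ ∘ₗ (refl4 v ∘ₗ refl4 e) with hρ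
  have hβiso : ∀ x y, mg (β x) (β y) = mg x y := fun x y => by
    simp only [hβ, LinearMap.comp_apply]; rw [refl4_iso e _ _ hen, refl4_iso v _ _ hvn]
  have hρiso : ∀ x y, mg (ρ x) (ρ y) = mg x y := fun x y => by
    simp only [hρ, LinearMap.comp_apply]; rw [hiso, refl4_iso v _ _ hvn, refl4_iso e _ _ hen]
  have hβw : β w = e := by
    simp only [hβ, LinearMap.comp_apply]; rw [hRvw, map_smul, hRee]; module
  have hρe : ρ e = e := by
    simp only [hρ, LinearMap.comp_apply]
    rw [hRee, map_smul, hRve, map_smul, map_smul, hw, hμν]; module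
  have hρL : IsRotationAt e ρ := by
    refine ⟨⟨hρiso, ?_, ?_⟩, hρe⟩
    · rw [hρ, LinearMap.det_comp, LinearMap.det_comp, refl4_det e hen, refl4_det v hvn, hdet]
      norm_num
    · apply pos_fut _ e (by rw [hρiso, h00]; norm_num) (by rw [he]; norm_num) he0
      have := hρiso e0 e
      rw [hρe] at this
      rw [this, mg_comm, mg_e0]; exact he0
  have hinn : ∀ x y, inn e (β x) y = - mg (refl4 v x) y := fun x y => by
    have h1 : ∀ z, inn e z y = - mg (refl4 e z) y := fun z => by
      rw [refl4_apply, mg_add_left, mg_smul_left, he, inn, mg_comm y e]; ring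
    rw [h1]
    simp only [hβ, LinearMap.comp_apply]; rw [refl4_invol e _ hen]
  have hβL : IsBoostAt e β := by
    refine ⟨⟨hβiso, ?_, ?_⟩, ?_, ?_⟩
    · rw [hβ, LinearMap.det_comp, refl4_det e hen, refl4_det v hvn]
      norm_num
    · apply pos_fut _ e (by rw [hβiso, h00]; norm_num) (by rw [he]; norm_num) he0
      have := hβiso e0 w
      rw [hβw] at this
      rw [this, mg_comm, mg_e0]; exact hw0
    · intro x y
      have : inn e x (β y) = inn e (β y) x := by
        simp only [inn, mg_comm x (β y)]; ring
      rw [this, hinn, hinn, refl4_adj, mg_comm]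
    · intro x hx
      rw [hinn, refl4_apply, mg_add_left, mg_smul_left, mg_comm v x]
      have := pos_quad v x hvp hx
      have h2 : -(mg x x + -2 / mg v v * mg x v * mg x v) =
          (2 * mg x v ^ 2 - mg x x * mg v v) / mg v v := by field_simp; ring
      rw [h2]
      exact div_pos (by linarith) hvp
  have hdecomp : μ = ρ ∘ₗ β := by
    refine LinearMap.ext fun x => ?_
    simp only [hρ, hβ, LinearMap.comp_apply]
    rw [refl4_invol e _ hen, refl4_invol v _ hvn]
  have hc := hcomm e ρ β he he0 hρL hβL hdecomp
  have hμe : μ e = β e := by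
    rw [hdecomp, hc, LinearMap.comp_apply, hρe]
  rw [hμe]
  simp only [hβ, LinearMap.comp_apply]
  rw [hRve, map_smul, refl4_apply, he, mg_comm w e]
  module

/-- If the polar decomposition of a restricted Lorentz transformation `μ` commutes
with respect to every future-directed timelike unit vector `e`, then `μ = 1`. -/
theorem commuting_polar_decompositions_imply_identity
    (μ : V4 →ₗ[ℝ] V4) (hμ : IsRestrictedLorentz μ)
    (hcomm : ∀ (e : V4) (ρ β : V4 →ₗ[ℝ] V4), mg e e = 1 → 0 < e 0 →
      IsRotationAt e ρ → IsBoostAt e β → μ = ρ ∘ₗ β → ρ ∘ₗ β = β ∘ₗ ρ) :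
    μ = LinearMap.id := by
  obtain ⟨hiso, hdet, hfut⟩ := id hμ
  have hu : IsUnit (LinearMap.det μ) := by rw [hdet]; exact isUnit_one
  obtain ⟨ν, hμν, hνμ⟩ : ∃ ν : V4 →ₗ[ℝ] V4, (∀ x, μ (ν x) = x) ∧ (∀ x, ν (μ x) = x) := by
    obtain ⟨ν, h1, h2⟩ := isUnit_iff_exists.1 ((LinearMap.isUnit_iff_isUnit_det μ).2 hu)
    exact ⟨ν, fun x => by simpa using congrArg (fun f => f x) h1,
      fun x => by simpa using congrArg (fun f => f x) h2⟩
  have hadj : ∀ x y, mg (ν x) y = mg x (μ y) := fun x y => by rw [← hiso, hμν]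
  have hk := key μ ν hμ hμν hνμ hcomm
  have h00 : mg e0 e0 = 1 := by simp [mg, e0]
  have he00 : e0 0 = 1 := by simp [e0]
  have hk2 : ∀ y : V4, 0 < mg y y → 0 < y 0 → ∃ k : ℝ, μ y + ν y = k • y := by
    intro y hy hy0
    set r := Real.sqrt (mg y y) with hr
    have hrp : 0 < r := Real.sqrt_pos.2 hy
    have hrr : r * r = mg y y := Real.mul_self_sqrt hy.le
    have := hk (r⁻¹ • y)
      (by rw [mg_smul_left, mg_smul_right, ← hrr]; field_simp)
      (by simp only [Pi.smul_apply, smul_eq_mul]; positivity)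
    generalize 2 * mg (r⁻¹ • y) (ν (r⁻¹ • y)) = k at this
    refine ⟨k, ?_⟩
    have h3 := congrArg (fun z => r • z) this
    simp only [map_smul, smul_add] at h3
    rw [smul_comm r k] at h3
    simpa only [smul_inv_smul₀ hrp.ne'] using h3
  obtain ⟨c, hc⟩ := hk2 e0 (by rw [h00]; norm_num) (by rw [he00]; norm_num)
  have hS : ∀ x : V4, x 0 = 0 → μ x + ν x = c • x := by
    intro x hx0
    set N := 1 + |mg x x| with hN
    have hN1 : 1 ≤ N := by rw [hN]; linarith [abs_nonneg (mg x x)]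
    have hxe : mg x e0 = 0 := by rw [mg_e0, hx0]
    obtain ⟨k, hk'⟩ := hk2 (N • e0 + x)
      (by
        simp only [mg_add_left, mg_add_right, mg_smul_left, mg_smul_right, mg_comm e0 x, hxe, h00]
        nlinarith [neg_abs_le (mg x x)])
      (by simp only [Pi.add_apply, Pi.smul_apply, he00, hx0, smul_eq_mul]; linarith)
    have hsum : N • (μ e0 + ν e0) + (μ x + ν x) = k • (N • e0 + x) := by
      rw [← hk']; simp only [map_add, map_smul]; module
    have hz : mg (μ x + ν x) e0 = 0 := by
      have h1 : mg (μ x) e0 = mg x (ν e0) := by rw [mg_comm, mg_comm x, hadj]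
      rw [mg_add_left, hadj, h1, add_comm, ← mg_add_right, hc, mg_smul_right, hxe, mul_zero]
    rw [hc] at hsum
    have h4 := congrArg (fun z => mg z e0) hsum
    simp only [mg_add_left, mg_smul_left, h00, hxe] at h4 hz
    have hkc : k = c := by
      have : N * (c - k) = 0 := by linarith
      rcases mul_eq_zero.1 this with h | h <;> linarith
    rw [hkc] at hsum
    have : μ x + ν x = c • (N • e0 + x) - N • c • e0 := by rw [← hsum]; module
    rw [this]; module
  have hquad : ∀ x : V4, μ x + ν x = c • x → 2 * mg (μ x) x = c * mg x x := by
    intro x hx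
    rw [← mg_smul_left c, ← hx, mg_add_left, hadj, mg_comm x]; ring
  have h0q : 2 * (μ e0) 0 = c := by
    have := hquad e0 hc
    rw [h00, mg_e0] at this; linarith
  have hzero : ∀ x : V4, x 0 = 0 → mg x (μ e0) = 0 → (μ x) 0 = 0 := by
    intro x hx0 hx
    have h1 : ν e0 = c • e0 - μ e0 := by rw [← hc]; module
    have h2 : mg (μ x) e0 = mg x (ν e0) := by rw [mg_comm, mg_comm x, hadj]
    have h3 : mg x (c • e0 - μ e0) = c * mg x e0 - mg x (μ e0) := by
      simp only [mg, Pi.sub_apply, Pi.smul_apply, smul_eq_mul]; ring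
    rw [← mg_e0 (μ x), h2, h1, h3, hx, mg_e0, hx0]; ring
  have hdiff : ∀ x : V4, x 0 = 0 → mg x (μ e0) = 0 →
      mg (μ x - x) (μ x - x) = (2 - c) * mg x x ∧ (μ x - x) 0 = 0 := by
    intro x hx0 hx
    constructor
    · have h1 := hquad x (hS x hx0)
      have h2 : mg (μ x - x) (μ x - x) = mg (μ x) (μ x) - 2 * mg (μ x) x + mg x x := by
        simp only [mg, Pi.sub_apply]; ring
      rw [h2, hiso, h1]; ring
    · rw [Pi.sub_apply, hzero x hx0 hx, hx0, sub_zero]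
  have hsp : ∀ x : V4, x 0 = 0 → mg x x = -(x 1 ^ 2 + x 2 ^ 2 + x 3 ^ 2) := by
    intro x hx; simp only [mg, hx]; ring
  have hu1 := hiso e0 e0
  rw [h00] at hu1
  obtain ⟨x, hx0, hxu, hxp⟩ : ∃ x : V4, x 0 = 0 ∧ mg x (μ e0) = 0 ∧ mg x x < 0 := by
    by_cases h : (μ e0) 1 = 0
    · exact ⟨![0, 1, 0, 0], by simp, by simp [mg, h], by simp [mg]⟩
    · refine ⟨![0, -(μ e0) 2, (μ e0) 1, 0], by simp, by simp [mg]; ring, ?_⟩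
      have : 0 < (μ e0) 1 ^ 2 := by positivity
      simp [mg]
      nlinarith [sq_nonneg ((μ e0) 2)]
  have hc2 : c ≤ 2 := by
    obtain ⟨h1, h2⟩ := hdiff x hx0 hxu
    rw [hsp _ h2] at h1
    nlinarith [sq_nonneg ((μ x - x) 1), sq_nonneg ((μ x - x) 2), sq_nonneg ((μ x - x) 3)]
  have hle : (μ e0) 0 ≤ 1 := by linarith
  simp only [mg] at hu1
  have hsq : (μ e0) 0 * (μ e0) 0 ≤ 1 := by nlinarith
  have u1 : (μ e0) 1 = 0 := by
    nlinarith [sq_nonneg ((μ e0) 1), sq_nonneg ((μ e0) 2), sq_nonneg ((μ e0) 3)]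
  have u2 : (μ e0) 2 = 0 := by
    nlinarith [sq_nonneg ((μ e0) 1), sq_nonneg ((μ e0) 2), sq_nonneg ((μ e0) 3)]
  have u3 : (μ e0) 3 = 0 := by
    nlinarith [sq_nonneg ((μ e0) 1), sq_nonneg ((μ e0) 2), sq_nonneg ((μ e0) 3)]
  have u0 : (μ e0) 0 = 1 := by
    rw [u1, u2, u3] at hu1; nlinarith
  have hue : μ e0 = e0 := by
    ext i; fin_cases i <;> simp [e0, u0, u1, u2, u3]
  have hfix : ∀ x : V4, x 0 = 0 → μ x = x := by
    intro x hx0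
    obtain ⟨h1, h2⟩ := hdiff x hx0 (by rw [hue, mg_e0, hx0])
    have h3 : c = 2 := by linarith
    have := neg_orth e0 (μ x - x) (by rw [h00]; norm_num) (by rw [mg_e0, h2])
      (by rw [h1, h3]; simp)
    exact sub_eq_zero.1 this
  refine LinearMap.ext fun x => ?_
  have hx : x = x 0 • e0 + (x - x 0 • e0) := by module
  have h1 := hfix (x - x 0 • e0) (by simp [he00])
  rw [LinearMap.id_apply]
  conv_lhs => rw [hx]
  rw [map_add, map_smul, hue, h1]; module
end
end
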